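/- (Inclusion monotonicity) Let W₁ and W₂ be n×n real symmetric positive semidefinite matrices with W₁ ⪯ W₂ in the Loewner order, and let K⁽¹⁾ = W₁(W₁+I)⁻¹ and K⁽²⁾ = W₂(W₂+I)⁻¹ be the corresponding marginal kernels. Then for every subset S ⊆ {1,…,n}, the inclusion probabilities satisfy det(K⁽¹⁾_S) ≤ det(K⁽²⁾_S); equivalently, every sensor configuration S has at least as high an inclusion probability under the L-ensemble DPP with kernel W₂ as under the one with kernel W₁. -/

import Mathlib

/-!
Since `W(W + 1)⁻¹ = 1 - (W + 1)⁻¹`, the marginal kernel is operator monotone because inversion is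
operator antitone, and it is positive semidefinite because it vanishes at `W = 0`. Passing to a
principal submatrix preserves the Loewner order, and the determinant is monotone on positive
semidefinite matrices.
-/

open Matrix BigOperators

/-- The principal submatrix of `M` indexed by the subset `S`. -/
def principalSubmatrix {n : ℕ} (M : Matrix (Fin n) (Fin n) ℝ) (S : Finset (Fin n)) :
    Matrix {i // i ∈ S} {i // i ∈ S} ℝ :=
  M.submatrix (fun i => (i : Fin n)) (fun i => (i : Fin n))

section MarginalKernel

variable {m : Type*} [Fintype m] [DecidableEq m]

/-- The marginal kernel `K = W(W + 1)⁻¹` of the L-ensemble determinantal point process with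
kernel `W`; the determinants of its principal submatrices are the inclusion probabilities. The
inverse is `0` when `W + 1` is singular, which does not happen for positive semidefinite `W`. -/
noncomputable def marginalKernel {R : Type*} [CommRing R] (W : Matrix m m R) : Matrix m m R :=
  W * (W + 1)⁻¹

theorem marginalKernel_zero {R : Type*} [CommRing R] :
    marginalKernel (0 : Matrix m m R) = 0 :=
  zero_mul _

theorem marginalKernel_eq_one_sub_inv {R : Type*} [CommRing R] {W : Matrix m m R}
    (hW : IsUnit (W + 1)) : marginalKernel W = 1 - (W + 1)⁻¹ := by
  rw [eq_sub_iff_add_eq]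
  calc W * (W + 1)⁻¹ + (W + 1)⁻¹ = (W + 1) * (W + 1)⁻¹ := by rw [add_mul, one_mul]
    _ = 1 := mul_nonsing_inv _ ((isUnit_iff_isUnit_det _).1 hW)

variable {K : Type*} [Field K] [PartialOrder K] [StarRing K] [StarOrderedRing K]
  {A B : Matrix m m K}

-- `B - A` and `A⁻¹ - B⁻¹` are the two Schur complements of the block matrix `[B, 1; 1, A⁻¹]`.
theorem posSemidef_inv_sub_inv (hA : A.PosDef) (hAB : (B - A).PosSemidef) :
    (A⁻¹ - B⁻¹).PosSemidef := by
  have hB : B.PosDef := by simpa only [add_sub_cancel] using hA.add_posSemidef hAB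
  let := hA.isUnit.invertible
  let := hA.inv.isUnit.invertible
  let := hB.isUnit.invertible
  have hblock : (fromBlocks B 1 1ᴴ A⁻¹).PosSemidef := by
    rw [PosDef.fromBlocks₂₂ _ _ hA.inv]
    simpa using hAB
  simpa using (PosDef.fromBlocks₁₁ _ _ hB).1 hblock

theorem posSemidef_marginalKernel_sub (hA : A.PosSemidef) (hAB : (B - A).PosSemidef) :
    (marginalKernel B - marginalKernel A).PosSemidef := by
  have hA' : (A + 1).PosDef := .posSemidef_add hA .one
  have hAB' : (B + 1 - (A + 1)).PosSemidef := by rwa [add_sub_add_right_eq_sub]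
  have hB' : (B + 1).PosDef := by simpa only [add_sub_cancel] using hA'.add_posSemidef hAB'
  rw [marginalKernel_eq_one_sub_inv hA'.isUnit, marginalKernel_eq_one_sub_inv hB'.isUnit,
    sub_sub_sub_cancel_left]
  exact posSemidef_inv_sub_inv hA' hAB'

theorem posSemidef_marginalKernel (hA : A.PosSemidef) : (marginalKernel A).PosSemidef := by
  simpa only [marginalKernel_zero, sub_zero] using
    posSemidef_marginalKernel_sub (B := A) .zero (by rwa [sub_zero])

end MarginalKernel

section Determinant

open scoped ComplexOrder MatrixOrder

variable {m 𝕜 : Type*} [Fintype m] [DecidableEq m] [RCLike 𝕜] {A B : Matrix m m 𝕜}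

theorem one_le_det_of_posSemidef_sub_one (hA : (A - 1).PosSemidef) : 1 ≤ A.det := by
  have hA' : A.IsHermitian := by
    simpa only [sub_add_cancel] using hA.isHermitian.add isHermitian_one
  have one_le_spectrum : ∀ x ∈ spectrum ℝ A, 1 ≤ x := (CFC.one_le_iff A hA').1 hA
  rw [hA'.det_eq_prod_eigenvalues]
  exact Finset.one_le_prod fun i _ ↦ by
    exact_mod_cast one_le_spectrum _ (hA'.eigenvalues_mem_spectrum_real i)

-- For invertible `A` and `B = A + CᴴC`, `det B = det A * det (1 + C * A⁻¹ * Cᴴ)`.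
theorem det_le_det_of_posSemidef_sub (hA : A.PosSemidef) (hAB : (B - A).PosSemidef) :
    A.det ≤ B.det := by
  have hB : B.PosSemidef := by simpa only [add_sub_cancel] using hA.add hAB
  by_cases hdet : A.det = 0
  · exact hdet ▸ hB.det_nonneg
  obtain ⟨C, hC⟩ := CStarAlgebra.nonneg_iff_eq_star_mul_self.1 hAB.nonneg
  obtain rfl : B = A + Cᴴ * C := eq_add_of_sub_eq' hC
  rw [det_add_mul _ _ (isUnit_iff_ne_zero.2 hdet)]
  refine le_mul_of_one_le_right hA.det_nonneg (one_le_det_of_posSemidef_sub_one ?_)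
  rw [add_sub_cancel_left]
  exact hA.inv.mul_mul_conjTranspose_same C

theorem inclusion_monotonicity_general {l : Type*} [Fintype l] [DecidableEq l]
    (hA : A.PosSemidef) (hAB : (B - A).PosSemidef) (f : l → m) :
    ((marginalKernel A).submatrix f f).det ≤ ((marginalKernel B).submatrix f f).det :=
  det_le_det_of_posSemidef_sub ((posSemidef_marginalKernel hA).submatrix f)
    ((posSemidef_marginalKernel_sub hA hAB).submatrix f)

end Determinant

/-- Inclusion monotonicity: if `W₁ ⪯ W₂` are positive semidefinite Gramians with
marginal kernels `K⁽ⁱ⁾ = Wᵢ(Wᵢ+I)⁻¹`, then every sensor configuration `S` has at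
least as high an inclusion probability `det(K_S)` under `W₂` as under `W₁`. -/
theorem inclusion_monotonicity {n : ℕ} (W₁ W₂ : Matrix (Fin n) (Fin n) ℝ)
    (hW₁ : W₁.PosSemidef) (hW₂ : W₂.PosSemidef) (h : (W₂ - W₁).PosSemidef) :
    ∀ S : Finset (Fin n),
      (principalSubmatrix (W₁ * (W₁ + 1)⁻¹) S).det
        ≤ (principalSubmatrix (W₂ * (W₂ + 1)⁻¹) S).det :=
  fun _ ↦ inclusion_monotonicity_general hW₁ h Subtype.val
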